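/- arXiv:0910.3118 — 2 statements merged into one kernel-verified Lean document; each statement's English description precedes it below -/
import Mathlib

section
/- Let Γ be an unweighted graph with N vertices. Then ((N−1)/N)·h ≤ (2𝓡/(1+𝓡))·h ≤ h̄ ≤ 1, and equality holds in the leftmost inequality if and only if Γ is a regular graph and N is odd. -/
open Finset

noncomputable section

namespace BJ

variable {V : Type*} [Fintype V] [DecidableEq V]

/-- The degree `d_i = ∑_j w_ij` of a vertex. -/
def deg (w : V → V → ℝ) (i : V) : ℝ := ∑ j, w i j

/-- The volume `vol(A) = ∑_{i ∈ A} d_i` of a vertex subset. -/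
def vol (w : V → V → ℝ) (A : Finset V) : ℝ := ∑ i ∈ A, deg w i

/-- The total edge weight `|E(A,B)| = ∑_{i ∈ A, j ∈ B} w_ij` between two vertex subsets. -/
def eW (w : V → V → ℝ) (A B : Finset V) : ℝ := ∑ i ∈ A, ∑ j ∈ B, w i j

/-- The normalized graph Laplacian `(Δu)(i) = u(i) - (1/d_i) ∑_j w_ij u(j)`. -/
def lap (w : V → V → ℝ) (u : V → ℝ) (i : V) : ℝ :=
  u i - (1 / deg w i) * ∑ j, w i j * u j

/-- `lam` is an eigenvalue of the normalized graph Laplacian. -/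
def IsEigen (w : V → V → ℝ) (lam : ℝ) : Prop :=
  ∃ u : V → ℝ, u ≠ 0 ∧ ∀ i, lap w u i = lam * u i

/-- The weighted graph is connected: any two vertices are joined by a chain of
positive-weight edges. -/
def Conn (w : V → V → ℝ) : Prop :=
  ∀ i j : V, Relation.ReflTransGen (fun a b => 0 < w a b) i j

/-- The weighted graph is bipartite: the vertex set splits into two nonempty classes with
no edges inside a class. -/
def Bipartite (w : V → V → ℝ) : Prop :=
  ∃ A : Finset V, A.Nonempty ∧ Aᶜ.Nonempty ∧
    (∀ i ∈ A, ∀ j ∈ A, w i j = 0) ∧ (∀ i ∈ Aᶜ, ∀ j ∈ Aᶜ, w i j = 0)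

/-- The Cheeger constant
`h = min { |E(U,Uᶜ)| / vol(U) : ∅ ≠ U ⊊ V, vol(U) ≤ vol(V)/2 }`. -/
def cheeger (w : V → V → ℝ) : ℝ :=
  sInf { r : ℝ | ∃ U : Finset V, U.Nonempty ∧ U ≠ Finset.univ ∧
    vol w U ≤ vol w Finset.univ / 2 ∧ r = eW w U Uᶜ / vol w U }

/-- The dual Cheeger constant
`h̄ = max { 2|E(V₁,V₂)| / (vol(V₁)+vol(V₂)) }` over pairs of disjoint nonempty vertex sets
`V₁, V₂` (the third class `V₃` of the partition being the complement of `V₁ ∪ V₂`). -/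
def dualCheeger (w : V → V → ℝ) : ℝ :=
  sSup { r : ℝ | ∃ V1 V2 : Finset V, V1.Nonempty ∧ V2.Nonempty ∧ Disjoint V1 V2 ∧
    r = 2 * eW w V1 V2 / (vol w V1 + vol w V2) }

/-- The weights of the neighborhood graph `Γ[l]`:
`w_ij[l] = ∑_{k₁,…,k_{l-1}} w_{i k₁} w_{k₁ k₂} ⋯ w_{k_{l-1} j} / (d_{k₁} ⋯ d_{k_{l-1}})`,
defined recursively (as a matrix, `wl w l = D ⬝ P^l`; in particular `wl w 1 = w`). -/
def wl (w : V → V → ℝ) : ℕ → V → V → ℝ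
  | 0 => fun i j => if i = j then deg w i else 0
  | n + 1 => fun i j => ∑ k, wl w n i k * w k j / deg w k

lemma greedy (d : V → ℝ) (n : ℝ) (hn : 0 ≤ n) (h1 : ∀ i, 1 ≤ d i) (h2 : ∀ i, d i ≤ n)
    (s : Finset V) :
    ∃ U : Finset V, U ⊆ s ∧ ∃ (k m : ℕ) (c T : ℝ), s.card = k + m ∧
      |∑ i ∈ U, d i - ∑ i ∈ s \ U, d i| ≤ c - T ∧ (m : ℝ) ≤ T ∧ c ≤ n ∧
      k * c + T ≤ ∑ i ∈ s, d i ∧ (m = 0 → ∀ x ∈ s, c ≤ d x) := by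
  induction s using Finset.induction_on_min_value d with
  | empty => exact ⟨∅, by simp, 0, 0, 0, 0, by simp, by simp, by simp, hn, by simp, by simp⟩
  | insert a s ha hmin ih =>
    obtain ⟨U0, hU0, k, m, c, T, hcard, hD, hm, hc, hsum, hall⟩ := ih
    -- arrange that U has the larger volume
    obtain ⟨U, hU, hD, hpos⟩ : ∃ U : Finset V, U ⊆ s ∧
        ∑ i ∈ U, d i - ∑ i ∈ s \ U, d i ≤ c - T ∧
        0 ≤ ∑ i ∈ U, d i - ∑ i ∈ s \ U, d i := by
      rcases le_total 0 (∑ i ∈ U0, d i - ∑ i ∈ s \ U0, d i) with h | h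
      · exact ⟨U0, hU0, by rwa [abs_of_nonneg h] at hD, h⟩
      · refine ⟨s \ U0, Finset.sdiff_subset, ?_, ?_⟩
        · rw [abs_of_nonpos h] at hD
          rw [Finset.sdiff_sdiff_eq_self hU0]; linarith
        · rw [Finset.sdiff_sdiff_eq_self hU0]; linarith
    have haU : a ∉ U := fun h => ha (hU h)
    have hins : insert a s \ U = insert a (s \ U) := by
      rw [Finset.insert_sdiff_of_notMem _ haU]
    have hsd : ∑ i ∈ insert a s \ U, d i = d a + ∑ i ∈ s \ U, d i := by
      rw [hins, Finset.sum_insert]; simp [ha]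
    have hcs : (insert a s).card = s.card + 1 := Finset.card_insert_of_notMem ha
    refine ⟨U, hU.trans (Finset.subset_insert _ _), ?_⟩
    rw [hsd, hcs, Finset.sum_insert ha]
    set A := ∑ i ∈ U, d i
    set B := ∑ i ∈ s \ U, d i
    have := h1 a
    have := h2 a
    rcases le_or_gt (d a) (A - B) with h | h
    · refine ⟨k, m + 1, c, T + d a, by omega, ?_, by push_cast; linarith, hc, by linarith,
        by simp⟩
      rw [abs_of_nonneg (by linarith)]; linarith
    · refine ⟨s.card + 1, 0, d a, 0, rfl, ?_, by simp, h2 a, ?_, ?_⟩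
      · rw [abs_of_nonpos (by linarith)]; linarith
      · have := Finset.card_nsmul_le_sum s d (d a) hmin
        rw [nsmul_eq_mul] at this
        push_cast; linarith
      · intro _ x hx
        rcases Finset.mem_insert.1 hx with rfl | hx
        · exact le_rfl
        · exact hmin x hx

lemma vol_add_compl (w : V → V → ℝ) (U : Finset V) :
    vol w U + vol w Uᶜ = vol w univ := Finset.sum_add_sum_compl U _

lemma min_eq' (a b : ℝ) : 2 * min a b = a + b - |a - b| := by
  rcases le_total a b with h | h
  · rw [min_eq_left h, abs_of_nonpos (by linarith)]; ring
  · rw [min_eq_right h, abs_of_nonneg (by linarith)]; ring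

/-- existence of a balanced set -/
lemma exists_balanced (w : V → V → ℝ) (h1 : ∀ i, 1 ≤ deg w i)
    (h2 : ∀ i, deg w i ≤ (Fintype.card V : ℝ) - 1) (hN : 2 ≤ Fintype.card V) :
    ∃ U : Finset V, ((Fintype.card V : ℝ) - 1) * vol w univ ≤
        2 * (Fintype.card V : ℝ) * min (vol w U) (vol w Uᶜ) ∧
      (((Fintype.card V : ℝ) - 1) * vol w univ =
        2 * (Fintype.card V : ℝ) * min (vol w U) (vol w Uᶜ) → ∃ d : ℝ, ∀ i, deg w i = d) := by
  have hN' : (2 : ℝ) ≤ Fintype.card V := by exact_mod_cast hN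
  obtain ⟨U, -, k, m, c, T, hcard, hD, hm, hc, hsum, hall⟩ :=
    greedy (deg w) ((Fintype.card V : ℝ) - 1) (by linarith) h1 h2 univ
  have hv := vol_add_compl w U
  have e := min_eq' (vol w U) (vol w Uᶜ)
  rw [← Finset.compl_eq_univ_sdiff] at hD
  change |vol w U - vol w Uᶜ| ≤ _ at hD
  change _ ≤ vol w univ at hsum
  rw [Finset.card_univ] at hcard
  have hcR : (Fintype.card V : ℝ) = k + m := by exact_mod_cast hcard
  set N : ℝ := (Fintype.card V : ℝ)
  have hmc : (m : ℝ) * c ≤ T * (N - 1) := by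
    have := mul_le_mul_of_nonneg_left hc (Nat.cast_nonneg (α := ℝ) m)
    have := mul_le_mul_of_nonneg_right hm (by linarith : 0 ≤ N - 1)
    linarith
  have hT : 0 ≤ T := le_trans (Nat.cast_nonneg m) hm
  have hND : N * |vol w U - vol w Uᶜ| ≤ N * (c - T) :=
    mul_le_mul_of_nonneg_left hD (by linarith)
  have hNc : N * c = k * c + m * c := by rw [hcR]; ring
  have hmin : 2 * N * min (vol w U) (vol w Uᶜ) =
      N * vol w univ - N * |vol w U - vol w Uᶜ| := by
    rw [← hv]; linear_combination N * e
  refine ⟨U, by rw [hmin]; linarith, fun heq => ⟨c, fun i => ?_⟩⟩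
  rw [hmin] at heq
  have hT0 : T = 0 := by linarith
  have hm0 : m = 0 := by
    have : (m : ℝ) ≤ 0 := by linarith
    exact_mod_cast le_antisymm this (Nat.cast_nonneg m)
  have hall := hall hm0
  have hs : ∑ i : V, c = ∑ i, deg w i := by
    apply le_antisymm
    · exact Finset.sum_le_sum fun i _ => hall i (mem_univ _)
    · rw [Finset.sum_const, Finset.card_univ, nsmul_eq_mul]
      change vol w univ ≤ N * c
      rw [hT0] at hND
      linarith
  exact ((Finset.sum_eq_sum_iff_of_le hall).1 hs i (mem_univ _)).symm

lemma deg_one_le (w : V → V → ℝ) (h01 : ∀ i j, w i j = 0 ∨ w i j = 1)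
    (hconn : Conn w) (hN : 2 ≤ Fintype.card V) (i : V) : 1 ≤ deg w i := by
  obtain ⟨j, hj⟩ := Fintype.exists_ne_of_one_lt_card (by omega : 1 < Fintype.card V) i
  rcases (hconn i j).cases_head with h | ⟨c, hc, -⟩
  · exact absurd h.symm hj
  · have : w i c = 1 := (h01 i c).resolve_left hc.ne'
    rw [← this]
    exact Finset.single_le_sum (f := fun j => w i j)
      (fun x _ => by rcases h01 i x with h | h <;> simp [h]) (mem_univ c)

lemma deg_le (w : V → V → ℝ) (h01 : ∀ i j, w i j = 0 ∨ w i j = 1)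
    (hloop : ∀ i, w i i = 0) (i : V) : deg w i ≤ (Fintype.card V : ℝ) - 1 := by
  have : deg w i ≤ ∑ j : V, ((1 : ℝ) - if i = j then 1 else 0) := by
    refine Finset.sum_le_sum fun j _ => ?_
    by_cases h : i = j
    · subst h; simp [hloop]
    · rcases h01 i j with h' | h' <;> simp [h, h']
  simpa using this

lemma eW_pos (w : V → V → ℝ) (hnn : ∀ i j, 0 ≤ w i j) (hconn : Conn w) (U : Finset V)
    (hU : U.Nonempty) (hU' : U ≠ univ) : 0 < eW w U Uᶜ := by
  by_contra hcon
  have hz : ∀ i ∈ U, ∀ j ∈ Uᶜ, w i j ≤ 0 := by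
    intro i hi j hj
    refine le_trans ?_ (not_lt.1 hcon)
    refine le_trans (Finset.single_le_sum (f := fun j => w i j) (fun x _ => hnn i x) hj) ?_
    exact Finset.single_le_sum (f := fun i => ∑ j ∈ Uᶜ, w i j)
      (fun x _ => Finset.sum_nonneg fun y _ => hnn x y) hi
  obtain ⟨i, hi⟩ := hU
  apply hU'
  ext j
  refine ⟨fun _ => mem_univ _, fun _ => ?_⟩
  induction hconn i j with
  | refl => exact hi
  | tail _ h ih =>
    by_contra hb
    exact absurd h (not_lt.2 (hz _ (ih (mem_univ _)) _ (Finset.mem_compl.2 hb)))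

lemma eW_le_vol (w : V → V → ℝ) (hnn : ∀ i j, 0 ≤ w i j) (A B : Finset V) :
    eW w A B ≤ vol w A := by
  refine Finset.sum_le_sum fun i _ => ?_
  exact Finset.sum_le_sum_of_subset_of_nonneg (Finset.subset_univ _) fun j _ _ => hnn i j

lemma eW_comm (w : V → V → ℝ) (hsym : ∀ i j, w i j = w j i) (A B : Finset V) :
    eW w A B = eW w B A := by
  unfold eW
  rw [Finset.sum_comm]
  exact Finset.sum_congr rfl fun i _ => Finset.sum_congr rfl fun j _ => hsym _ _

/-- Theorem 17.
For an unweighted graph with `N` vertices,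
`((N-1)/N) h ≤ (2𝓡/(1+𝓡)) h ≤ h̄ ≤ 1`, with equality in the leftmost inequality iff
the graph is regular and `N` is odd. -/
theorem cheeger_le_dualCheeger_unweighted
    (w : V → V → ℝ)
    (hsym : ∀ i j, w i j = w j i) (h01 : ∀ i j, w i j = 0 ∨ w i j = 1)
    (hloop : ∀ i, w i i = 0) (hconn : Conn w) (hN : 2 ≤ Fintype.card V)
    (R : ℝ)
    (hR : R = sSup { r : ℝ | ∃ U : Finset V, U.Nonempty ∧ U ≠ Finset.univ ∧
        r = min (vol w U) (vol w Uᶜ) / max (vol w U) (vol w Uᶜ) }) :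
    (((Fintype.card V : ℝ) - 1) / (Fintype.card V : ℝ) * cheeger w ≤
        2 * R / (1 + R) * cheeger w ∧
      2 * R / (1 + R) * cheeger w ≤ dualCheeger w ∧
      dualCheeger w ≤ 1) ∧
      (((Fintype.card V : ℝ) - 1) / (Fintype.card V : ℝ) * cheeger w =
          2 * R / (1 + R) * cheeger w ↔
        ((∃ d : ℝ, ∀ i, deg w i = d) ∧ Odd (Fintype.card V))) := by
  have hnn : ∀ i j, 0 ≤ w i j := fun i j => by rcases h01 i j with h | h <;> simp [h]
  have h1 := deg_one_le w h01 hconn hN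
  have h2 := deg_le w h01 hloop
  have hN' : (2 : ℝ) ≤ Fintype.card V := by exact_mod_cast hN
  have hvpos : ∀ U : Finset V, U.Nonempty → 0 < vol w U := fun U hU =>
    Finset.sum_pos (fun i _ => by linarith [h1 i]) hU
  have hne : Nonempty V := Fintype.card_pos_iff.1 (by omega)
  have hW : 0 < vol w univ := hvpos _ univ_nonempty
  have hcne : ∀ U : Finset V, U ≠ univ → Uᶜ.Nonempty := fun U hU => by
    rwa [Finset.nonempty_iff_ne_empty, Ne, Finset.compl_eq_empty_iff]
  -- balanced set
  have hprop : ∀ U : Finset V, 0 < min (vol w U) (vol w Uᶜ) → U.Nonempty ∧ U ≠ univ := by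
    intro U hU
    rw [lt_min_iff] at hU
    constructor
    · rw [Finset.nonempty_iff_ne_empty]; rintro rfl; simp [vol] at hU
    · rintro rfl; simp [vol] at hU
  -- R is attained
  have hfin : ({ r : ℝ | ∃ U : Finset V, U.Nonempty ∧ U ≠ Finset.univ ∧
        r = min (vol w U) (vol w Uᶜ) / max (vol w U) (vol w Uᶜ) }).Finite := by
    refine (Set.finite_range fun U : Finset V =>
      min (vol w U) (vol w Uᶜ) / max (vol w U) (vol w Uᶜ)).subset ?_
    rintro r ⟨U, -, -, rfl⟩; exact ⟨U, rfl⟩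
  obtain ⟨Ub, hUb, hUbeq⟩ := exists_balanced w h1 h2 hN
  have hUbpos : 0 < min (vol w Ub) (vol w Ubᶜ) := by
    have : 0 < ((Fintype.card V : ℝ) - 1) * vol w univ := mul_pos (by linarith) hW
    have h := this.trans_le hUb
    exact pos_of_mul_pos_right h (by linarith)
  obtain ⟨hUb1, hUb2⟩ := hprop Ub hUbpos
  have hRmem : R ∈ { r : ℝ | ∃ U : Finset V, U.Nonempty ∧ U ≠ Finset.univ ∧
        r = min (vol w U) (vol w Uᶜ) / max (vol w U) (vol w Uᶜ) } := by
    rw [hR]; exact Set.Nonempty.csSup_mem ⟨_, Ub, hUb1, hUb2, rfl⟩ hfin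
  obtain ⟨U0, hU01, hU02, hRU⟩ := hRmem
  have hmm : ∀ U : Finset V, max (vol w U) (vol w Uᶜ) =
      vol w univ - min (vol w U) (vol w Uᶜ) := fun U => by
    rw [← vol_add_compl w U, ← min_add_max (vol w U) (vol w Uᶜ)]; ring
  have hmaxpos : ∀ U : Finset V, U.Nonempty → 0 < max (vol w U) (vol w Uᶜ) :=
    fun U hU => lt_max_of_lt_left (hvpos U hU)
  have hmaxi : ∀ U : Finset V, U.Nonempty → U ≠ univ →
      min (vol w U) (vol w Uᶜ) ≤ min (vol w U0) (vol w U0ᶜ) := by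
    intro U hU hU'
    have h : min (vol w U) (vol w Uᶜ) / max (vol w U) (vol w Uᶜ) ≤ R := by
      rw [hR]; exact le_csSup hfin.bddAbove ⟨U, hU, hU', rfl⟩
    rw [hRU, div_le_div_iff₀ (hmaxpos U hU) (hmaxpos U0 hU01), hmm, hmm] at h
    have : min (vol w U) (vol w Uᶜ) * vol w univ ≤
      min (vol w U0) (vol w U0ᶜ) * vol w univ := by linarith
    exact le_of_mul_le_mul_right this hW
  have hfac : 2 * R / (1 + R) = 2 * min (vol w U0) (vol w U0ᶜ) / vol w univ := by
    have hp := hmaxpos U0 hU01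
    have hmp : 0 < min (vol w U0) (vol w U0ᶜ) :=
      lt_min (hvpos _ hU01) (hvpos _ (hcne _ hU02))
    have hRp : 0 < R := by rw [hRU]; exact div_pos hmp hp
    have : R * max (vol w U0) (vol w U0ᶜ) = min (vol w U0) (vol w U0ᶜ) := by
      rw [hRU]; exact div_mul_cancel₀ _ hp.ne'
    rw [hmm] at this
    rw [div_eq_div_iff (by linarith) hW.ne']
    linear_combination 2 * this
  -- cheeger attained
  have hcfin : ({ r : ℝ | ∃ U : Finset V, U.Nonempty ∧ U ≠ Finset.univ ∧
    vol w U ≤ vol w Finset.univ / 2 ∧ r = eW w U Uᶜ / vol w U }).Finite := by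
    refine (Set.finite_range fun U : Finset V => eW w U Uᶜ / vol w U).subset ?_
    rintro r ⟨U, -, -, -, rfl⟩; exact ⟨U, rfl⟩
  have hdfin : ({ r : ℝ | ∃ V1 V2 : Finset V, V1.Nonempty ∧ V2.Nonempty ∧ Disjoint V1 V2 ∧
    r = 2 * eW w V1 V2 / (vol w V1 + vol w V2) }).Finite := by
    refine (Set.finite_range fun p : Finset V × Finset V =>
      2 * eW w p.1 p.2 / (vol w p.1 + vol w p.2)).subset ?_
    rintro r ⟨U, U', -, -, -, rfl⟩; exact ⟨(U, U'), rfl⟩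
  obtain ⟨Us, hUs1, hUs2, hUsmin⟩ : ∃ U : Finset V, U.Nonempty ∧ U ≠ univ ∧
      vol w U = min (vol w U0) (vol w U0ᶜ) := by
    rcases le_total (vol w U0) (vol w U0ᶜ) with h | h
    · exact ⟨U0, hU01, hU02, (min_eq_left h).symm⟩
    · refine ⟨U0ᶜ, hcne _ hU02, ?_, (min_eq_right h).symm⟩
      rw [Ne, Finset.compl_eq_univ_iff]; exact hU01.ne_empty
  have hUshalf : vol w Us ≤ vol w univ / 2 := by
    rw [hUsmin, ← vol_add_compl w U0]
    linarith [min_le_left (vol w U0) (vol w U0ᶜ), min_le_right (vol w U0) (vol w U0ᶜ)]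
  have hcpos : 0 < cheeger w := by
    have hm : cheeger w ∈ { r : ℝ | ∃ U : Finset V, U.Nonempty ∧ U ≠ Finset.univ ∧
      vol w U ≤ vol w Finset.univ / 2 ∧ r = eW w U Uᶜ / vol w U } :=
      Set.Nonempty.csInf_mem ⟨_, Us, hUs1, hUs2, hUshalf, rfl⟩ hcfin
    obtain ⟨U, a, b, -, h⟩ := hm
    rw [h]; exact div_pos (eW_pos w hnn hconn U a b) (hvpos U a)
  have hNpos : (0 : ℝ) < Fintype.card V := by linarith
  have hUb0 := hUb.trans (mul_le_mul_of_nonneg_left (hmaxi Ub hUb1 hUb2)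
    (by linarith : (0 : ℝ) ≤ 2 * Fintype.card V))
  refine ⟨⟨?_, ?_, ?_⟩, ?_⟩
  · refine mul_le_mul_of_nonneg_right ?_ hcpos.le
    rw [hfac, div_le_div_iff₀ hNpos hW]
    linarith
  · have ha : cheeger w ≤ eW w Us Usᶜ / vol w Us :=
      csInf_le hcfin.bddBelow ⟨Us, hUs1, hUs2, hUshalf, rfl⟩
    have hb : 2 * eW w Us Usᶜ / (vol w Us + vol w Usᶜ) ≤ dualCheeger w :=
      le_csSup hdfin.bddAbove ⟨Us, Usᶜ, hUs1, hcne _ hUs2, disjoint_compl_right, rfl⟩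
    refine le_trans ?_ hb
    rw [hfac, ← hUsmin, vol_add_compl]
    rw [le_div_iff₀ (hvpos _ hUs1)] at ha
    rw [div_mul_eq_mul_div]
    gcongr ?_ / _
    linarith
  · refine csSup_le ⟨_, Us, Usᶜ, hUs1, hcne _ hUs2, disjoint_compl_right, rfl⟩ ?_
    rintro r ⟨A, B, hA, hB, -, rfl⟩
    rw [div_le_one (add_pos (hvpos _ hA) (hvpos _ hB))]
    have := eW_le_vol w hnn A B
    have := eW_le_vol w hnn B A
    have := eW_comm w hsym A B
    linarith
  · rw [mul_left_inj' hcpos.ne', hfac, div_eq_div_iff hNpos.ne' hW.ne']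
    constructor
    · intro heq
      have hle := mul_le_mul_of_nonneg_left (hmaxi Ub hUb1 hUb2)
        (by linarith : (0 : ℝ) ≤ 2 * Fintype.card V)
      obtain ⟨d, hd⟩ := hUbeq (le_antisymm hUb (by linarith))
      refine ⟨⟨d, hd⟩, ?_⟩
      by_contra hodd
      rw [Nat.not_odd_iff_even] at hodd
      obtain ⟨t, ht⟩ := hodd
      obtain ⟨U, -, hU⟩ := Finset.exists_subset_card_eq
        (s := (univ : Finset V)) (n := t) (by rw [Finset.card_univ]; omega)
      have hv1 : vol w U = t * d := by simp [vol, hd, hU]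
      have hv2 : vol w Uᶜ = t * d := by
        have : Uᶜ.card = t := by rw [Finset.card_compl]; omega
        simp [vol, hd, this]
      have hvW := vol_add_compl w U
      have hm : min (vol w U) (vol w Uᶜ) = t * d := by rw [hv1, hv2, min_self]
      have hU' := hprop U (by rw [hm]; linarith)
      have hle' := mul_le_mul_of_nonneg_left (hmaxi U hU'.1 hU'.2)
        (by linarith : (0 : ℝ) ≤ 2 * Fintype.card V)
      rw [hm] at hle'
      have : 2 * (Fintype.card V : ℝ) * (t * d) = Fintype.card V * vol w univ := by
        rw [← hvW, hv1, hv2]; ring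
      linarith
    · rintro ⟨⟨d, hd⟩, hodd⟩
      refine le_antisymm (by linarith) ?_
      have hd0 : 0 ≤ d := by
        have := h1 (Classical.arbitrary V); rw [hd] at this; linarith
      have hWd : vol w univ = Fintype.card V * d := by simp [vol, hd]
      rw [← hUsmin] at *
      have hvs : vol w Us = Us.card * d := by simp [vol, hd]
      obtain ⟨t, ht⟩ := hodd
      have hdp : 0 < d := by
        have := h1 (Classical.arbitrary V); rw [hd] at this; linarith
      have hc : Us.card ≤ t := by
        rw [hvs, hWd] at hUshalf
        have : (2 : ℝ) * Us.card ≤ Fintype.card V :=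
          le_of_mul_le_mul_right (by linarith) hdp
        have : 2 * Us.card ≤ Fintype.card V := by exact_mod_cast this
        omega
      have hc' : (2 : ℝ) * Us.card ≤ Fintype.card V - 1 := by
        have h3 : (Us.card : ℝ) ≤ t := by exact_mod_cast hc
        rw [ht]; push_cast; linarith
      rw [hvs, hWd]
      have := mul_le_mul_of_nonneg_right hc' (mul_nonneg hNpos.le hd0)
      linarith

end BJ
end
end

section
/- Let l ≥ 1 and let h[l] denote the Cheeger constant of the neighborhood graph Γ[l]. If l is even, then all eigenvalues of Δ satisfy 1 − (1 − h[l]²)^{1/(2l)} ≤ λ_1 ≤ … ≤ λ_{N−1} ≤ 1 + (1 − h[l]²)^{1/(2l)}. If l is odd, then 1 − (1 − h[l]²)^{1/(2l)} ≤ λ_1. -/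
open Finset

noncomputable section

namespace BJ

variable {V : Type*} [Fintype V] [DecidableEq V]

theorem wl_nonneg (w : V → V → ℝ) (hnn : ∀ i j, 0 ≤ w i j) (hdeg : ∀ i, 0 < deg w i)
    (n : ℕ) : ∀ i j, 0 ≤ wl w n i j := by
  induction n with
  | zero =>
    intro i j
    simp only [wl]
    split_ifs
    · exact (hdeg i).le
    · exact le_rfl
  | succ n ih =>
    intro i j
    simp only [wl]
    exact Finset.sum_nonneg fun k _ => div_nonneg (mul_nonneg (ih i k) (hnn k j)) (hdeg k).le

theorem wl_mulVec (w : V → V → ℝ) (hdeg : ∀ i, 0 < deg w i) (u : V → ℝ) (c : ℝ)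
    (hu : ∀ i, ∑ j, w i j * u j = c * (deg w i * u i)) (n : ℕ) :
    ∀ i, ∑ j, wl w n i j * u j = c ^ n * (deg w i * u i) := by
  induction n with
  | zero => intro i; simp [wl]
  | succ n ih =>
    intro i
    simp only [wl, Finset.sum_mul]
    rw [Finset.sum_comm]
    have : ∀ k, ∑ j, wl w n i k * w k j / deg w k * u j = c * (wl w n i k * u k) := by
      intro k
      have h1 : ∑ j, wl w n i k * w k j / deg w k * u j
          = wl w n i k / deg w k * ∑ j, w k j * u j := by
        rw [Finset.mul_sum]
        exact Finset.sum_congr rfl fun j _ => by ring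
      rw [h1, hu k]
      have := (hdeg k).ne'
      field_simp
    simp only [this]
    rw [← Finset.mul_sum, ih i]
    ring

theorem wl_deg (w : V → V → ℝ) (hdeg : ∀ i, 0 < deg w i) (n : ℕ) (i : V) :
    deg (wl w n) i = deg w i := by
  have := wl_mulVec w hdeg (fun _ => 1) 1 (fun i => by simp [deg]) n i
  simpa [deg] using this

theorem wl_col (w : V → V → ℝ) (hsym : ∀ i j, w i j = w j i) (hdeg : ∀ i, 0 < deg w i)
    (n : ℕ) : ∀ j, ∑ i, wl w n i j = deg w j := by
  induction n with
  | zero => intro j; simp [wl]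
  | succ n ih =>
    intro j
    simp only [wl]
    rw [Finset.sum_comm]
    have : ∀ k, ∑ i, wl w n i k * w k j / deg w k = w j k := by
      intro k
      have h1 : ∑ i, wl w n i k * w k j / deg w k = (∑ i, wl w n i k) * (w k j / deg w k) := by
        rw [Finset.sum_mul]
        exact Finset.sum_congr rfl fun j _ => by ring
      rw [h1, ih k, hsym k j]
      have := (hdeg k).ne'
      field_simp
    simp only [this]
    rfl

theorem coarea (W : V → V → ℝ) (h : ℝ) (M : ℝ)
    (hd : ∀ i, 0 < deg W i)
    (hh : ∀ U : Finset V, U.Nonempty → vol W U ≤ M → h * vol W U ≤ eW W U Uᶜ) (n : ℕ) :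
    ∀ f : V → ℝ, (∀ i, 0 ≤ f i) → (univ.filter fun i => 0 < f i).card ≤ n →
      vol W (univ.filter fun i => 0 < f i) ≤ M →
      h * ∑ i, deg W i * f i ≤ ∑ i, ∑ j, W i j * max (f i - f j) 0 := by
  induction n with
  | zero =>
    intro f hf hc _
    have h0 : ∀ i, f i = 0 := by
      intro i
      have : (univ.filter fun i => 0 < f i) = ∅ := by
        rw [← Finset.card_eq_zero]; omega
      have hi : i ∉ (univ.filter fun i => 0 < f i) := by rw [this]; simp
      simp at hi
      exact le_antisymm hi (hf i)
    simp [h0]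
  | succ n ih =>
    intro f hf hc hv
    set S := univ.filter fun i => 0 < f i with hS
    have memS : ∀ i, i ∈ S ↔ 0 < f i := by intro i; simp [hS]
    by_cases hne : S.Nonempty
    swap
    · apply ih f hf _ hv
      rw [← hS, Finset.not_nonempty_iff_eq_empty.1 hne]; simp
    obtain ⟨a, haS, ha⟩ := Finset.exists_min_image S f hne
    set m := f a with hm
    have hmpos : 0 < m := (memS a).1 haS
    set I : V → ℝ := fun i => if i ∈ S then 1 else 0 with hI
    set g : V → ℝ := fun i => f i - m * I i with hg
    have hz : ∀ i, i ∉ S → f i = 0 := fun i hi =>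
      le_antisymm (not_lt.1 fun hp => hi ((memS i).2 hp)) (hf i)
    have hgnn : ∀ i, 0 ≤ g i := by
      intro i
      by_cases hi : i ∈ S
      · simp [hg, hI, hi]; exact ha i hi
      · simp [hg, hI, hi, hz i hi]
    have hsub : (univ.filter fun i => 0 < g i) ⊂ S := by
      rw [Finset.ssubset_iff_of_subset]
      · exact ⟨a, haS, by simp [hg, hI, haS, hm]⟩
      · intro i hi
        by_contra hiS
        simp [hg, hI, hiS, hz i hiS] at hi
    have hcard := Finset.card_lt_card hsub
    have hvol : vol W (univ.filter fun i => 0 < g i) ≤ M := by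
      refine le_trans ?_ hv
      exact Finset.sum_le_sum_of_subset_of_nonneg hsub.1 fun i _ _ => (hd i).le
    have key := ih g hgnn (by omega) hvol
    have hU := hh S hne hv
    have e1 : ∑ i, deg W i * f i = ∑ i, deg W i * g i + m * vol W S := by
      have : vol W S = ∑ i, deg W i * I i := by
        simp [vol, hI, Finset.sum_ite_mem]
      rw [this, Finset.mul_sum, ← Finset.sum_add_distrib]
      exact Finset.sum_congr rfl fun i _ => by simp only [hg]; ring
    have e2 : ∑ i, ∑ j, W i j * max (f i - f j) 0
        = ∑ i, ∑ j, W i j * max (g i - g j) 0 + m * eW W S Sᶜ := by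
      have : eW W S Sᶜ = ∑ i, ∑ j, W i j * (I i * (1 - I j)) := by
        unfold eW
        rw [← Finset.sum_subset (Finset.subset_univ S)]
        · refine Finset.sum_congr rfl fun i hi => ?_
          rw [← Finset.sum_subset (Finset.subset_univ Sᶜ)]
          · refine Finset.sum_congr rfl fun j hj => ?_
            have hj' : j ∉ S := by simpa using hj
            simp [hI, hi, hj']
          · intro j _ hj
            have hj' : j ∈ S := by simpa using hj
            simp [hI, hj']
        · intro i _ hi
          simp [hI, hi]
      rw [this, Finset.mul_sum, ← Finset.sum_add_distrib]
      refine Finset.sum_congr rfl fun i _ => ?_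
      rw [Finset.mul_sum, ← Finset.sum_add_distrib]
      refine Finset.sum_congr rfl fun j _ => ?_
      have : max (f i - f j) 0 = max (g i - g j) 0 + m * (I i * (1 - I j)) := by
        by_cases hi : i ∈ S <;> by_cases hj : j ∈ S
        · simp [hg, hI, hi, hj]
        · have := ha i hi
          simp only [hg, hI, hi, hj, hz j hj, if_true, if_false]
          rw [max_eq_left (by linarith), max_eq_left (by linarith)]
          ring
        · have := ha j hj
          simp only [hg, hI, hi, hj, hz i hi, if_true, if_false]
          rw [max_eq_right (by linarith), max_eq_right (by linarith)]
          ring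
        · simp [hg, hI, hi, hj]
      rw [this]; ring
    rw [e1, e2]
    nlinarith [mul_le_mul_of_nonneg_left hU hmpos.le]

theorem cheeger_half (W : V → V → ℝ) (h : ℝ) (hh0 : 0 ≤ h) (M : ℝ)
    (hW : ∀ i j, 0 ≤ W i j) (hd : ∀ i, 0 < deg W i)
    (hcol : ∀ j, ∑ i, W i j = deg W j)
    (hh : ∀ U : Finset V, U.Nonempty → vol W U ≤ M → h * vol W U ≤ eW W U Uᶜ)
    (u : V → ℝ) (μ : ℝ) (hu : ∀ i, ∑ j, W i j * u j = μ * (deg W i * u i))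
    (hpos : ∃ i, 0 < u i) (hv : vol W (univ.filter fun i => 0 < u i) ≤ M) :
    0 ≤ 1 - h ^ 2 ∧ (0 ≤ μ → μ ^ 2 ≤ 1 - h ^ 2) := by
  set g : V → ℝ := fun i => max (u i) 0 with hg
  have hg0 : ∀ i, 0 ≤ g i := fun i => le_max_right _ _
  have hgu : ∀ i, u i ≤ g i := fun i => le_max_left _ _
  have hgpos : ∀ i, 0 < g i ^ 2 ↔ 0 < u i := by
    intro i
    rw [sq_pos_iff, ← (hg0 i).lt_iff_ne']
    simp [hg]
  set B := ∑ i, deg W i * g i ^ 2 with hB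
  set A := ∑ i, ∑ j, W i j * (g i * g j) with hA
  have hBpos : 0 < B := by
    obtain ⟨i, hi⟩ := hpos
    exact Finset.sum_pos' (fun i _ => mul_nonneg (hd i).le (sq_nonneg _))
      ⟨i, Finset.mem_univ _, mul_pos (hd i) ((hgpos i).2 hi)⟩
  have hAB : μ * B ≤ A := by
    rw [hB, hA, Finset.mul_sum]
    refine Finset.sum_le_sum fun i _ => ?_
    have e : ∑ j, W i j * (g i * g j) = g i * ∑ j, W i j * g j := by
      rw [Finset.mul_sum]; exact Finset.sum_congr rfl fun j _ => by ring
    rw [e]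
    rcases le_or_gt (u i) 0 with hi | hi
    · have : g i = 0 := max_eq_right hi
      simp [this]
    · have hgi : g i = u i := max_eq_left hi.le
      have h1 : ∑ j, W i j * u j ≤ ∑ j, W i j * g j :=
        Finset.sum_le_sum fun j _ => mul_le_mul_of_nonneg_left (hgu j) (hW i j)
      have h2 := mul_le_mul_of_nonneg_left h1 (hg0 i)
      rw [hu i] at h2
      calc μ * (deg W i * g i ^ 2) = g i * (μ * (deg W i * u i)) := by rw [hgi]; ring
        _ ≤ _ := h2
  have r1 : ∀ f : V → ℝ, ∑ i, ∑ j, W i j * f i = ∑ i, deg W i * f i := fun f => by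
    simp only [deg, Finset.sum_mul]
  have r2 : ∀ f : V → ℝ, ∑ i, ∑ j, W i j * f j = ∑ i, deg W i * f i := fun f => by
    rw [Finset.sum_comm]
    simp only [← Finset.sum_mul, hcol]
  have co := coarea W h M hd hh _ (fun i => g i ^ 2) (fun i => sq_nonneg _) le_rfl
    (by simpa only [hgpos] using hv)
  have habs : ∑ i, ∑ j, W i j * |g i ^ 2 - g j ^ 2|
      = 2 * ∑ i, ∑ j, W i j * max (g i ^ 2 - g j ^ 2) 0 := by
    have e : ∑ i, ∑ j, W i j * |g i ^ 2 - g j ^ 2|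
        = 2 * ∑ i, ∑ j, W i j * max (g i ^ 2 - g j ^ 2) 0
          - (∑ i, ∑ j, W i j * g i ^ 2 - ∑ i, ∑ j, W i j * g j ^ 2) := by
      simp only [Finset.mul_sum, ← Finset.sum_sub_distrib]
      refine Finset.sum_congr rfl fun i _ => Finset.sum_congr rfl fun j _ => ?_
      rcases le_total (g i ^ 2 - g j ^ 2) 0 with hx | hx
      · rw [abs_of_nonpos hx, max_eq_right hx]; ring
      · rw [abs_of_nonneg hx, max_eq_left hx]; ring
    rw [e, r1 (fun i => g i ^ 2), r2 (fun i => g i ^ 2)]; ring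
  have hsq : ∀ s : ℝ, s ^ 2 = 1 →
      ∑ i, ∑ j, W i j * (g i + s * g j) ^ 2 = 2 * B + 2 * s * A := by
    intro s hs
    have e : ∑ i, ∑ j, W i j * (g i + s * g j) ^ 2
        = ∑ i, ∑ j, W i j * g i ^ 2 + ∑ i, ∑ j, W i j * g j ^ 2 + 2 * s * A := by
      rw [hA]
      simp only [Finset.mul_sum, ← Finset.sum_add_distrib]
      refine Finset.sum_congr rfl fun i _ => Finset.sum_congr rfl fun j _ => ?_
      linear_combination W i j * g j ^ 2 * hs
    rw [e, r1 (fun i => g i ^ 2), r2 (fun i => g i ^ 2)]; ring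
  have cs : (∑ i, ∑ j, W i j * |g i ^ 2 - g j ^ 2|) ^ 2 ≤
      (∑ i, ∑ j, W i j * (g i + (-1) * g j) ^ 2) * (∑ i, ∑ j, W i j * (g i + 1 * g j) ^ 2) := by
    simp only [← Fintype.sum_prod_type']
    refine Finset.sum_sq_le_sum_mul_sum_of_sq_le_mul _ ?_ ?_ ?_
    · exact fun p _ => mul_nonneg (hW _ _) (sq_nonneg _)
    · exact fun p _ => mul_nonneg (hW _ _) (sq_nonneg _)
    · intro p _
      refine le_of_eq ?_
      rw [mul_pow, sq_abs]; ring
  rw [hsq (-1) (by norm_num), hsq 1 (by norm_num), habs] at cs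
  have c2 : (h * B) ^ 2 ≤ (∑ i, ∑ j, W i j * max (g i ^ 2 - g j ^ 2) 0) ^ 2 :=
    pow_le_pow_left₀ (mul_nonneg hh0 hBpos.le) co 2
  have fin : A ^ 2 ≤ (1 - h ^ 2) * B ^ 2 := by nlinarith
  have hB2 : 0 < B ^ 2 := by positivity
  refine ⟨?_, fun hμ => ?_⟩
  · by_contra hc
    push Not at hc
    nlinarith [sq_nonneg A]
  · have : (μ * B) ^ 2 ≤ A ^ 2 := pow_le_pow_left₀ (mul_nonneg hμ hBpos.le) hAB 2
    rw [mul_pow] at this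
    exact le_of_mul_le_mul_right (this.trans fin) hB2

theorem cheeger_main (W : V → V → ℝ)
    (hW : ∀ i j, 0 ≤ W i j) (hd : ∀ i, 0 < deg W i)
    (hcol : ∀ j, ∑ i, W i j = deg W j)
    (u : V → ℝ) (hu0 : u ≠ 0) (μ : ℝ)
    (hu : ∀ i, ∑ j, W i j * u j = μ * (deg W i * u i))
    (horth : ∑ i, deg W i * u i = 0) :
    0 ≤ 1 - cheeger W ^ 2 ∧ (0 ≤ μ → μ ^ 2 ≤ 1 - cheeger W ^ 2) := by
  obtain ⟨a, ha⟩ := Function.ne_iff.1 hu0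
  have hvuniv : 0 < vol W univ :=
    Finset.sum_pos (fun i _ => hd i) ⟨a, Finset.mem_univ _⟩
  have hnnS : ∀ r ∈ { r : ℝ | ∃ U : Finset V, U.Nonempty ∧ U ≠ Finset.univ ∧
      vol W U ≤ vol W Finset.univ / 2 ∧ r = eW W U Uᶜ / vol W U }, 0 ≤ r := by
    rintro r ⟨U, _, _, _, rfl⟩
    exact div_nonneg (Finset.sum_nonneg fun i _ => Finset.sum_nonneg fun j _ => hW i j)
      (Finset.sum_nonneg fun i _ => (hd i).le)
  have hh0 : 0 ≤ cheeger W := Real.sInf_nonneg hnnS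
  have hh : ∀ U : Finset V, U.Nonempty → vol W U ≤ vol W univ / 2 →
      cheeger W * vol W U ≤ eW W U Uᶜ := by
    intro U hU hv
    have hvp : 0 < vol W U := Finset.sum_pos (fun i _ => hd i) hU
    rw [← le_div_iff₀ hvp]
    refine csInf_le ⟨0, hnnS⟩ ⟨U, hU, ?_, hv, rfl⟩
    rintro rfl
    linarith
  have hposneg : ∀ v : V → ℝ, v a ≠ 0 → ∑ i, deg W i * v i = 0 → ∃ i, 0 < v i := by
    intro v hva hv
    by_contra hc
    push Not at hc
    have := (Finset.sum_eq_zero_iff_of_nonpos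
      (fun i _ => mul_nonpos_of_nonneg_of_nonpos (hd i).le (hc i))).1 hv a (Finset.mem_univ _)
    rcases mul_eq_zero.1 this with h | h
    · exact (hd a).ne' h
    · exact hva h
  have hsum : vol W (univ.filter fun i => 0 < u i) + vol W (univ.filter fun i => 0 < (-u) i)
      ≤ vol W univ := by
    unfold vol
    rw [← Finset.sum_union]
    · exact Finset.sum_le_sum_of_subset_of_nonneg (Finset.subset_univ _) fun i _ _ => (hd i).le
    · rw [Finset.disjoint_filter]
      intro i _ h1 h2
      simp at h2
      linarith
  rcases le_or_gt (vol W (univ.filter fun i => 0 < u i)) (vol W univ / 2) with hv | hv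
  · exact cheeger_half W _ hh0 _ hW hd hcol hh u μ hu (hposneg u ha horth) hv
  · refine cheeger_half W _ hh0 _ hW hd hcol hh (-u) μ ?_ (hposneg (-u) ?_ ?_) (by linarith)
    · intro i; simp [hu i]
    · simpa using ha
    · simpa using horth

theorem eigen_bound (w : V → V → ℝ)
    (hsym : ∀ i j, w i j = w j i) (hnn : ∀ i j, 0 ≤ w i j)
    (hdeg : ∀ i, 0 < deg w i) (lam : ℝ) (hlam : IsEigen w lam) (h0 : lam ≠ 0) (l : ℕ) :
    0 ≤ 1 - cheeger (wl w l) ^ 2 ∧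
      (0 ≤ (1 - lam) ^ l → ((1 - lam) ^ l) ^ 2 ≤ 1 - cheeger (wl w l) ^ 2) := by
  obtain ⟨u, hu0, hu⟩ := hlam
  have hu1 : ∀ i, ∑ j, w i j * u j = (1 - lam) * (deg w i * u i) := by
    intro i
    have := hu i
    have hd := (hdeg i).ne'
    unfold lap at this
    field_simp at this
    linarith
  have horth : ∑ i, deg w i * u i = 0 := by
    have e1 : ∑ i, ∑ j, w i j * u j = ∑ i, deg w i * u i := by
      rw [Finset.sum_comm]
      refine Finset.sum_congr rfl fun j _ => ?_
      rw [← Finset.sum_mul, deg]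
      simp only [hsym j]
    simp only [hu1] at e1
    rw [← Finset.mul_sum] at e1
    have : lam * ∑ i, deg w i * u i = 0 := by linarith
    exact (mul_eq_zero.1 this).resolve_left h0
  have hdl := wl_deg w hdeg l
  refine cheeger_main (wl w l) (wl_nonneg w hnn hdeg l) ?_ ?_ u hu0 _ ?_ ?_
  · intro i; rw [hdl]; exact hdeg i
  · intro j; rw [hdl]; exact wl_col w hsym hdeg l j
  · intro i; rw [hdl]; exact wl_mulVec w hdeg u _ hu1 l i
  · simp only [hdl]; exact horth

theorem root_bound (x c : ℝ) (l : ℕ) (hl : 1 ≤ l) (hx : 0 ≤ x) (h : (x ^ l) ^ 2 ≤ c) :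
    x ≤ c ^ ((1 : ℝ) / (2 * l)) := by
  have hl' : (0 : ℝ) < l := by exact_mod_cast hl
  have hc : 0 ≤ c := le_trans (sq_nonneg _) h
  have h1 : x ^ (2 * (l : ℝ)) ≤ c := by
    have : x ^ (2 * (l : ℝ)) = (x ^ l) ^ 2 := by
      rw [← pow_mul, ← Real.rpow_natCast]
      congr 1
      push_cast
      ring
    rw [this]; exact h
  rw [one_div]
  exact (Real.le_rpow_inv_iff_of_pos hx hc (by positivity)).2 h1

/-- Corollary: Cheeger bound via neighborhood graphs.
With `h[l]` the Cheeger constant of the neighborhood graph `Γ[l]`: if `l` is even then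
`1 - (1 - h[l]²)^{1/(2l)} ≤ λ₁ ≤ … ≤ λ_{N-1} ≤ 1 + (1 - h[l]²)^{1/(2l)}`, and if `l` is
odd then `1 - (1 - h[l]²)^{1/(2l)} ≤ λ₁`. -/
theorem eigenvalue_bounds_from_neighborhood_cheeger
    (w : V → V → ℝ)
    (hsym : ∀ i j, w i j = w j i) (hnn : ∀ i j, 0 ≤ w i j)
    (hdeg : ∀ i, 0 < deg w i) (hconn : Conn w) (hN : 2 ≤ Fintype.card V)
    (lam1 lamN : ℝ)
    (hlam1 : IsEigen w lam1) (hlam1pos : 0 < lam1)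
    (hlam1min : ∀ μ, IsEigen w μ → μ ≠ 0 → lam1 ≤ μ)
    (hlamN : IsEigen w lamN) (hlamNmax : ∀ μ, IsEigen w μ → μ ≤ lamN)
    (l : ℕ) (hl : 1 ≤ l) :
    (Even l →
        1 - (1 - cheeger (wl w l) ^ 2) ^ ((1 : ℝ) / (2 * l)) ≤ lam1 ∧
          lamN ≤ 1 + (1 - cheeger (wl w l) ^ 2) ^ ((1 : ℝ) / (2 * l))) ∧
      (Odd l → 1 - (1 - cheeger (wl w l) ^ 2) ^ ((1 : ℝ) / (2 * l)) ≤ lam1) := by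
  have hlamNpos : 0 < lamN := lt_of_lt_of_le hlam1pos (hlamNmax _ hlam1)
  obtain ⟨hc, h1⟩ := eigen_bound w hsym hnn hdeg lam1 hlam1 hlam1pos.ne' l
  obtain ⟨-, hN'⟩ := eigen_bound w hsym hnn hdeg lamN hlamN hlamNpos.ne' l
  have hr : 0 ≤ (1 - cheeger (wl w l) ^ 2) ^ ((1 : ℝ) / (2 * l)) := Real.rpow_nonneg hc _
  have hfirst : 1 - (1 - cheeger (wl w l) ^ 2) ^ ((1 : ℝ) / (2 * l)) ≤ lam1 := by
    rcases le_or_gt (1 - lam1) 0 with hx | hx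
    · linarith
    · have := root_bound (1 - lam1) _ l hl hx.le (h1 (pow_nonneg hx.le _))
      linarith
  refine ⟨fun he => ⟨hfirst, ?_⟩, fun _ => hfirst⟩
  rcases le_or_gt 0 (1 - lamN) with hx | hx
  · linarith
  · have e : (lamN - 1) ^ l = (1 - lamN) ^ l := by
      rw [← he.neg_pow]; congr 1; ring
    have := root_bound (lamN - 1) (1 - cheeger (wl w l) ^ 2) l hl (by linarith)
      (by rw [e]; exact hN' (he.pow_nonneg _))
    linarith

end BJ
end
end
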